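/- Let X and Y be centered Gaussian vectors in ℝⁿ with E[X_i²] = E[Y_i²] for all i and Cov(X_i, X_j) ≤ Cov(Y_i, Y_j) for all i, j. For 1 ≤ ℓ ≤ n define S_ℓ(Z) := max{∑_{i∈I} Z_i : I ⊆ {1,…,n}, |I| = ℓ}. Then E[S_ℓ(X)] ≥ E[S_ℓ(Y)] for every ℓ = 1,…,n. -/

import Mathlib

open MeasureTheory ProbabilityTheory

/-- `X` is a centered Gaussian vector: every linear combination of its coordinates is a
centered real Gaussian (with its own variance). -/
def IsCenteredGaussianVec {Ω : Type*} [MeasurableSpace Ω] (P : Measure Ω) {n : ℕ}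
    (X : Fin n → Ω → ℝ) : Prop :=
  ∀ a : Fin n → ℝ, Measure.map (fun ω => ∑ i, a i * X i ω) P
    = gaussianReal 0 (Real.toNNReal (∫ ω, (∑ i, a i * X i ω) ^ 2 ∂P))

open Matrix in
/-- rank one matrix -/
def rk {n : ℕ} (v : Fin n → ℝ) : Matrix (Fin n) (Fin n) ℝ := Matrix.vecMulVec v v

lemma rk_psd {n : ℕ} (v : Fin n → ℝ) : (rk v).PosSemidef := by
  have := Matrix.posSemidef_vecMulVec_self_star v
  simpa [rk] using this

open Matrix in
lemma rk_quad {n : ℕ} (v x : Fin n → ℝ) : x ⬝ᵥ (rk v *ᵥ x) = (v ⬝ᵥ x) ^ 2 := by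
  rw [rk, Matrix.vecMulVec_mulVec]
  simp [dotProduct_comm x v]
  ring

/-- centered Gaussian measure with covariance matrix `S` -/
noncomputable def GG {n : ℕ} (S : Matrix (Fin n) (Fin n) ℝ) : Measure (EuclideanSpace ℝ (Fin n)) :=
  multivariateGaussian 0 S

instance {n : ℕ} (S : Matrix (Fin n) (Fin n) ℝ) : IsGaussian (GG S) := by
  unfold GG; infer_instance

open Matrix in
lemma charFun_GG {n : ℕ} {S : Matrix (Fin n) (Fin n) ℝ} (hS : S.PosSemidef)
    (x : EuclideanSpace ℝ (Fin n)) :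
    charFun (GG S) x = Complex.exp (- (((x.ofLp ⬝ᵥ S *ᵥ x.ofLp : ℝ) : ℂ) / 2)) := by
  rw [GG, charFun_multivariateGaussian hS]
  simp

lemma GG_add {n : ℕ} {S T : Matrix (Fin n) (Fin n) ℝ} (hS : S.PosSemidef) (hT : T.PosSemidef) :
    GG (S + T) = (GG S).conv (GG T) := by
  apply Measure.ext_of_charFun
  ext x
  rw [charFun_conv, charFun_GG hS, charFun_GG hT, charFun_GG (hS.add hT), ← Complex.exp_add,
    Matrix.add_mulVec, dotProduct_add]
  congr 1
  push_cast
  ring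

lemma GG_rk {n : ℕ} (v : Fin n → ℝ) (a : NNReal) :
    GG ((a : ℝ) • rk v) = (gaussianReal 0 a).map (fun g => g • WithLp.toLp 2 v) := by
  have hp : ((a : ℝ) • rk v).PosSemidef := (rk_psd v).smul a.2
  have hm : Measurable (fun g : ℝ => g • (WithLp.toLp 2 v : EuclideanSpace ℝ (Fin n))) := by
    fun_prop
  have := Measure.isProbabilityMeasure_map (μ := gaussianReal 0 a) hm.aemeasurable
  apply Measure.ext_of_charFun
  ext x
  rw [charFun_GG hp, charFun_apply, integral_map hm.aemeasurable (by fun_prop)]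
  have h2 := charFun_gaussianReal (μ := 0) (v := a) (inner ℝ (WithLp.toLp 2 v) x)
  rw [charFun_apply_real] at h2
  simp_rw [real_inner_smul_left]
  have h3 : inner ℝ (WithLp.toLp 2 v) x = v ⬝ᵥ x.ofLp := by
    simp [PiLp.inner_apply, dotProduct, mul_comm]
  rw [h3] at h2 ⊢
  rw [Matrix.smul_mulVec, dotProduct_smul, rk_quad]
  push_cast
  convert h2.symm using 1
  · congr 1
    push_cast [smul_eq_mul]
    ring
  · simp_rw [mul_comm]

lemma GG_eps {n : ℕ} (e : ℝ) :
    GG ((e ^ 2) • (1 : Matrix (Fin n) (Fin n) ℝ)) =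
      (GG (1 : Matrix (Fin n) (Fin n) ℝ)).map (fun z => e • z) := by
  have hp : ((e ^ 2) • (1 : Matrix (Fin n) (Fin n) ℝ)).PosSemidef :=
    Matrix.PosSemidef.one.smul (sq_nonneg e)
  have := Measure.isProbabilityMeasure_map (μ := GG (1 : Matrix (Fin n) (Fin n) ℝ))
    (f := fun z => e • z) (by fun_prop)
  apply Measure.ext_of_charFun
  ext x
  rw [charFun_map_smul, charFun_GG hp, charFun_GG Matrix.PosSemidef.one]
  congr 3
  simp [Matrix.smul_mulVec]
  ring

section comp
variable {n : ℕ} {f : EuclideanSpace ℝ (Fin n) → ℝ} {K : ℝ}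

lemma f_cont (hf : ∀ x y, |f x - f y| ≤ K * ‖x - y‖) : Continuous f := by
  have : LipschitzWith K.toNNReal f := by
    apply LipschitzWith.of_dist_le_mul
    intro x y
    rw [Real.dist_eq, dist_eq_norm]
    refine (hf x y).trans ?_
    gcongr
    exact Real.le_coe_toNNReal K
  exact this.continuous

lemma f_int (hf : ∀ x y, |f x - f y| ≤ K * ‖x - y‖)
    (μ : Measure (EuclideanSpace ℝ (Fin n))) [IsGaussian μ] : Integrable f μ := by
  have h1 : Integrable (fun x : EuclideanSpace ℝ (Fin n) => |f 0| + K * ‖x‖) μ :=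
    (integrable_const _).add ((IsGaussian.integrable_id (μ := μ)).norm.const_mul K)
  refine h1.mono' (f_cont hf).aestronglyMeasurable (ae_of_all _ fun x => ?_)
  have := hf x 0
  rw [sub_zero] at this
  rw [Real.norm_eq_abs]
  have h2 := abs_sub_abs_le_abs_sub (f x) (f 0)
  linarith

lemma f_shift (hf : ∀ x y, |f x - f y| ≤ K * ‖x - y‖) (w : EuclideanSpace ℝ (Fin n)) :
    ∀ x y, |f (w + x) - f (w + y)| ≤ K * ‖x - y‖ := by
  intro x y
  simpa using hf (w + x) (w + y)

lemma int_add (hf : ∀ x y, |f x - f y| ≤ K * ‖x - y‖)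
    {S T : Matrix (Fin n) (Fin n) ℝ} (hS : S.PosSemidef) (hT : T.PosSemidef) :
    ∫ x, f x ∂(GG (S + T)) = ∫ w, ∫ z, f (w + z) ∂(GG T) ∂(GG S) := by
  have h := f_int hf (GG (S + T))
  rw [GG_add hS hT] at h ⊢
  exact integral_conv h

lemma int_add' (hf : ∀ x y, |f x - f y| ≤ K * ‖x - y‖)
    {S T : Matrix (Fin n) (Fin n) ℝ} (hS : S.PosSemidef) (hT : T.PosSemidef) :
    Integrable (fun w => ∫ z, f (w + z) ∂(GG T)) (GG S) := by
  have h := f_int hf (GG (S + T))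
  rw [GG_add hS hT, Measure.conv, integrable_map_measure (f_cont hf).aestronglyMeasurable
    (by fun_prop)] at h
  exact h.integral_prod_left

/-- one-step comparison -/
lemma step (hf : ∀ x y, |f x - f y| ≤ K * ‖x - y‖) {u v : Fin n → ℝ}
    (huv : ∀ (w : EuclideanSpace ℝ (Fin n)) (a : ℝ),
      f (w + a • WithLp.toLp 2 u) + f (w + (-a) • WithLp.toLp 2 u)
        ≤ f (w + a • WithLp.toLp 2 v) + f (w + (-a) • WithLp.toLp 2 v))
    {S : Matrix (Fin n) (Fin n) ℝ} (hS : S.PosSemidef) (a : NNReal) :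
    ∫ x, f x ∂(GG (S + (a : ℝ) • rk u)) ≤ ∫ x, f x ∂(GG (S + (a : ℝ) • rk v)) := by
  have hu : ((a : ℝ) • rk u).PosSemidef := (rk_psd u).smul a.2
  have hv : ((a : ℝ) • rk v).PosSemidef := (rk_psd v).smul a.2
  rw [int_add hf hS hu, int_add hf hS hv]
  refine integral_mono (int_add' hf hS hu) (int_add' hf hS hv) fun w => ?_
  have key : ∀ v : Fin n → ℝ,
      Integrable (fun g : ℝ => f (w + g • WithLp.toLp 2 v)) (gaussianReal 0 a) ∧
      Integrable (fun g : ℝ => f (w + (-g) • WithLp.toLp 2 v)) (gaussianReal 0 a) ∧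
      2 * ∫ z, f (w + z) ∂(GG ((a : ℝ) • rk v)) =
      ∫ g, (f (w + g • WithLp.toLp 2 v) + f (w + (-g) • WithLp.toLp 2 v)) ∂(gaussianReal 0 a) := by
    intro v
    have hc : Continuous fun z => f (w + z) := f_cont (f_shift hf w)
    have hi := f_int (f_shift hf w) (GG ((a : ℝ) • rk v))
    rw [GG_rk] at hi ⊢
    have hm : Measurable (fun g : ℝ => g • (WithLp.toLp 2 v : EuclideanSpace ℝ (Fin n))) := by
      fun_prop
    rw [integral_map hm.aemeasurable hc.aestronglyMeasurable]
    rw [integrable_map_measure hc.aestronglyMeasurable hm.aemeasurable] at hi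
    have hi1 : Integrable (fun g : ℝ => f (w + g • WithLp.toLp 2 v)) (gaussianReal 0 a) := hi
    have hneg : (gaussianReal 0 a).map (fun x : ℝ => -x) = gaussianReal 0 a := by
      simpa using gaussianReal_map_neg (μ := 0) (v := a)
    have hc2 : Continuous (fun g : ℝ => f (w + g • WithLp.toLp 2 v)) := 
      hc.comp (by fun_prop : Continuous fun g : ℝ => g • (WithLp.toLp 2 v : EuclideanSpace ℝ (Fin n)))
    have hi2 : Integrable (fun g : ℝ => f (w + (-g) • WithLp.toLp 2 v)) (gaussianReal 0 a) := by
      have h := hi1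
      rw [← hneg, integrable_map_measure hc2.aestronglyMeasurable (by fun_prop)] at h
      exact h
    refine ⟨hi1, hi2, ?_⟩
    rw [integral_add hi1 hi2]
    have : ∫ g, f (w + (-g) • WithLp.toLp 2 v) ∂(gaussianReal 0 a)
        = ∫ g, f (w + g • WithLp.toLp 2 v) ∂(gaussianReal 0 a) := by
      conv_rhs => rw [← hneg]
      rw [integral_map (by fun_prop) hc2.aestronglyMeasurable]
    rw [this]; ring
  obtain ⟨u1, u2, u3⟩ := key u
  obtain ⟨v1, v2, v3⟩ := key v
  have := integral_mono (u1.add u2) (v1.add v2) (fun g => huv w g)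
  simp only [Pi.add_apply] at this
  show ∫ z, f (w + z) ∂(GG ((a : ℝ) • rk u)) ≤ ∫ z, f (w + z) ∂(GG ((a : ℝ) • rk v))
  linarith

lemma psd_sum {ι : Type*} (F : Finset ι) (c : ι → NNReal) (u : ι → Fin n → ℝ) :
    (∑ p ∈ F, (c p : ℝ) • rk (u p)).PosSemidef :=
  Matrix.posSemidef_sum F fun p _ => (rk_psd (u p)).smul (c p).2

lemma multi (hf : ∀ x y, |f x - f y| ≤ K * ‖x - y‖) {ι : Type*} [DecidableEq ι] (c : ι → NNReal)
    {u v : ι → Fin n → ℝ}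
    (F : Finset ι)
    (huv : ∀ p ∈ F, c p ≠ 0 → ∀ (w : EuclideanSpace ℝ (Fin n)) (a : ℝ),
      f (w + a • WithLp.toLp 2 (u p)) + f (w + (-a) • WithLp.toLp 2 (u p))
        ≤ f (w + a • WithLp.toLp 2 (v p)) + f (w + (-a) • WithLp.toLp 2 (v p)))
    {S : Matrix (Fin n) (Fin n) ℝ} (hS : S.PosSemidef) :
    ∫ x, f x ∂(GG (S + ∑ p ∈ F, (c p : ℝ) • rk (u p)))
      ≤ ∫ x, f x ∂(GG (S + ∑ p ∈ F, (c p : ℝ) • rk (v p))) := by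
  induction F using Finset.induction_on generalizing S with
  | empty => simp
  | insert p F hp ih =>
    rw [Finset.sum_insert hp, Finset.sum_insert hp, ← add_assoc]
    have h1 := ih (fun q hq => huv q (Finset.mem_insert_of_mem hq))
      (S := S + (c p : ℝ) • rk (u p)) (hS.add ((rk_psd _).smul (c p).2))
    refine h1.trans ?_
    by_cases hc : c p = 0
    · simp [hc]
    have h2 := step hf (huv p (Finset.mem_insert_self _ _) hc) (hS.add (psd_sum F c v)) (c p)
    have e1 : S + (c p : ℝ) • rk (u p) + ∑ q ∈ F, (c q : ℝ) • rk (v q)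
        = S + ∑ q ∈ F, (c q : ℝ) • rk (v q) + (c p : ℝ) • rk (u p) := by abel
    have e2 : S + ((c p : ℝ) • rk (v p) + ∑ q ∈ F, (c q : ℝ) • rk (v q))
        = S + ∑ q ∈ F, (c q : ℝ) • rk (v q) + (c p : ℝ) • rk (v p) := by abel
    rw [e1, e2]
    exact h2

lemma eps_close (hf : ∀ x y, |f x - f y| ≤ K * ‖x - y‖) {S : Matrix (Fin n) (Fin n) ℝ}
    (hS : S.PosSemidef) {e : ℝ} (he : 0 ≤ e) :
    |∫ x, f x ∂(GG (S + (e ^ 2) • (1 : Matrix (Fin n) (Fin n) ℝ))) - ∫ x, f x ∂(GG S)|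
      ≤ e * (K * ∫ z, ‖z‖ ∂(GG (1 : Matrix (Fin n) (Fin n) ℝ))) := by
  have hp : ((e ^ 2) • (1 : Matrix (Fin n) (Fin n) ℝ)).PosSemidef :=
    Matrix.PosSemidef.one.smul (sq_nonneg e)
  rw [int_add hf hS hp, ← integral_sub (int_add' hf hS hp) (f_int hf _), ← Real.norm_eq_abs]
  refine (norm_integral_le_of_norm_le_const (ae_of_all _ fun w => ?_)).trans_eq
    (by rw [probReal_univ, mul_one])
  have hc : Continuous fun z => f (w + z) := f_cont (f_shift hf w)
  have hi := f_int (f_shift hf w) (GG ((e ^ 2) • (1 : Matrix (Fin n) (Fin n) ℝ)))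
  have hsub : ∫ z, f (w + z) ∂(GG ((e ^ 2) • (1 : Matrix (Fin n) (Fin n) ℝ))) - f w
      = ∫ z, (f (w + z) - f w) ∂(GG ((e ^ 2) • (1 : Matrix (Fin n) (Fin n) ℝ))) := by
    rw [integral_sub hi (integrable_const _)]; simp
  rw [hsub, GG_eps, integral_map (by fun_prop)
    (by exact (hc.sub continuous_const).aestronglyMeasurable :
      AEStronglyMeasurable (fun z => f (w + z) - f w) _), ← integral_const_mul,
    ← integral_const_mul]
  refine norm_integral_le_of_norm_le
    (((IsGaussian.integrable_id).norm.const_mul K).const_mul e) (ae_of_all _ fun z => ?_)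
  have := hf (w + e • z) w
  rw [add_sub_cancel_left, norm_smul, Real.norm_eq_abs, abs_of_nonneg he] at this
  rw [Real.norm_eq_abs]
  refine this.trans_eq ?_
  ring

open Matrix in
lemma small_psd {ι : Type*} [Fintype ι] (c : ι → NNReal) (v : ι → Fin n → ℝ) {e : ℝ} (he : 0 < e) :
    ∃ m : ℕ, 0 < m ∧ (e • (1 : Matrix (Fin n) (Fin n) ℝ)
      - (1 / (m : ℝ)) • ∑ p, (c p : ℝ) • rk (v p)).PosSemidef := by
  set C : ℝ := ∑ p, (c p : ℝ) * (v p ⬝ᵥ v p) with hC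
  have hC0 : 0 ≤ C := Finset.sum_nonneg fun p _ =>
    mul_nonneg (c p).2 (Finset.sum_nonneg fun i _ => mul_self_nonneg _)
  obtain ⟨m, hm⟩ := exists_nat_gt (C / e)
  have hm0 : (0 : ℝ) < m := lt_of_le_of_lt (by positivity) hm
  refine ⟨m, by exact_mod_cast hm0, ?_⟩
  apply Matrix.PosSemidef.of_dotProduct_mulVec_nonneg
  · refine Matrix.IsHermitian.sub ?_ ?_
    · exact (Matrix.PosSemidef.one.smul he.le).isHermitian
    · exact ((psd_sum Finset.univ c v).smul (by positivity)).isHermitian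
  intro x
  rw [star_trivial, Matrix.sub_mulVec, dotProduct_sub, Matrix.smul_mulVec, Matrix.smul_mulVec,
    dotProduct_smul, dotProduct_smul, Matrix.one_mulVec, Matrix.sum_mulVec, dotProduct_sum]
  have h1 : ∑ p, x ⬝ᵥ ((c p : ℝ) • rk (v p)) *ᵥ x ≤ C * (x ⬝ᵥ x) := by
    rw [hC, Finset.sum_mul]
    refine Finset.sum_le_sum fun p _ => ?_
    rw [Matrix.smul_mulVec, dotProduct_smul, rk_quad, smul_eq_mul, mul_assoc]
    refine mul_le_mul_of_nonneg_left ?_ (c p).2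
    have := Finset.sum_mul_sq_le_sq_mul_sq Finset.univ (v p) x
    simpa [dotProduct, pow_two] using this
  have hx : 0 ≤ x ⬝ᵥ x := Finset.sum_nonneg fun i _ => mul_self_nonneg _
  rw [smul_eq_mul, smul_eq_mul, sub_nonneg, div_mul_eq_mul_div, one_mul, div_le_iff₀ hm0]
  have h2 : C ≤ e * m := by
    rw [div_lt_iff₀ he] at hm; linarith
  nlinarith

lemma compare (hf : ∀ x y, |f x - f y| ≤ K * ‖x - y‖)
    (hsub : ∀ i j : Fin n, i ≠ j → ∀ (w : EuclideanSpace ℝ (Fin n)) (a : ℝ),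
      f (w + a • WithLp.toLp 2 (Pi.single i 1 + Pi.single j 1))
        + f (w + (-a) • WithLp.toLp 2 (Pi.single i 1 + Pi.single j 1))
        ≤ f (w + a • WithLp.toLp 2 (Pi.single i 1 - Pi.single j 1))
        + f (w + (-a) • WithLp.toLp 2 (Pi.single i 1 - Pi.single j 1)))
    {A B : Matrix (Fin n) (Fin n) ℝ} (hA : A.PosSemidef) (hB : B.PosSemidef)
    (hd : ∀ i, A i i = B i i) (hle : ∀ i j, A i j ≤ B i j) :
    ∫ x, f x ∂(GG B) ≤ ∫ x, f x ∂(GG A) := by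
  set u : Fin n × Fin n → Fin n → ℝ := fun p => Pi.single p.1 1 + Pi.single p.2 1 with hu
  set v : Fin n × Fin n → Fin n → ℝ := fun p => Pi.single p.1 1 - Pi.single p.2 1 with hv
  set c : Fin n × Fin n → NNReal := fun p => ((B p.1 p.2 - A p.1 p.2) / 4).toNNReal with hc
  have hc' : ∀ i j, ((c (i, j) : NNReal) : ℝ) = (B i j - A i j) / 4 := fun i j =>
    Real.coe_toNNReal _ (by linarith [hle i j])
  have hAs : ∀ i j, A i j = A j i := fun i j => by simpa using (hA.isHermitian.apply i j).symm
  have hBs : ∀ i j, B i j = B j i := fun i j => by simpa using (hB.isHermitian.apply i j).symm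
  have hD : B - A = ∑ p, (c p : ℝ) • rk (u p) - ∑ p, (c p : ℝ) • rk (v p) := by
    rw [← Finset.sum_sub_distrib]
    ext k l
    rw [Matrix.sum_apply, Fintype.sum_prod_type]
    have : ∀ i j, ((c (i, j) : ℝ) • rk (u (i, j)) - (c (i, j) : ℝ) • rk (v (i, j))) k l
        = (if k = i then (if l = j then 2 * (c (i, j) : ℝ) else 0) else 0)
        + (if l = i then (if k = j then 2 * (c (i, j) : ℝ) else 0) else 0) := by
      intro i j
      simp only [rk, hu, hv, Matrix.sub_apply, Matrix.smul_apply, Matrix.vecMulVec_apply,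
        Pi.add_apply, Pi.sub_apply, Pi.single_apply, smul_eq_mul]
      split_ifs <;> ring
    simp only [this, Finset.sum_add_distrib]
    rw [Matrix.sub_apply]
    have s1 : ∑ i, ∑ j, (if k = i then (if l = j then 2 * (c (i, j) : ℝ) else 0) else 0)
        = 2 * c (k, l) := by
      rw [Finset.sum_eq_single k (by intro b _ hb; simp [hb.symm]) (by simp)]
      simp
    have s2 : ∑ i, ∑ j, (if l = i then (if k = j then 2 * (c (i, j) : ℝ) else 0) else 0)
        = 2 * c (l, k) := by
      rw [Finset.sum_eq_single l (by intro b _ hb; simp [hb.symm]) (by simp)]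
      simp
    rw [s1, s2, hc', hc', hAs l k, hBs l k]
    ring
  have main : ∀ e : ℝ, 0 < e → ∫ x, f x ∂(GG (B + (e ^ 2) • (1 : Matrix (Fin n) (Fin n) ℝ)))
      ≤ ∫ x, f x ∂(GG (A + (e ^ 2) • (1 : Matrix (Fin n) (Fin n) ℝ))) := by
    intro e he
    obtain ⟨m, hm, hpsd⟩ := small_psd c v (pow_pos he 2)
    have hm' : (0 : ℝ) < m := by exact_mod_cast hm
    set d : Fin n × Fin n → NNReal := fun p => (1 / (m : NNReal)) * c p with hdd
    have hds : ∀ q : Fin n × Fin n → Fin n → ℝ,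
        ∑ p, (d p : ℝ) • rk (q p) = (1 / (m : ℝ)) • ∑ p, (c p : ℝ) • rk (q p) := by
      intro q
      rw [Finset.smul_sum]
      refine Finset.sum_congr rfl fun p _ => ?_
      rw [smul_smul]
      simp [hdd]
    set I1 : Matrix (Fin n) (Fin n) ℝ := (e ^ 2) • (1 : Matrix (Fin n) (Fin n) ℝ) with hI1
    have ind : ∀ k : ℕ, k ≤ m → ∫ x, f x ∂(GG (A + I1 + ((k : ℝ) / m) • (B - A)))
        ≤ ∫ x, f x ∂(GG (A + I1)) := by
      intro k
      induction k with
      | zero => intro _; simp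
      | succ k ih =>
        intro hk
        refine le_trans ?_ (ih (by omega))
        have hk' : (k : ℝ) ≤ m := by exact_mod_cast (by omega : k ≤ m)
        have hR : ((1 - (k : ℝ) / m) • A + ((k : ℝ) / m) • B
            + (I1 - (1 / (m : ℝ)) • ∑ p, (c p : ℝ) • rk (v p))).PosSemidef := by
          refine ((hA.smul ?_).add (hB.smul (by positivity))).add hpsd
          rw [sub_nonneg, div_le_one hm']; exact hk'
        have hmul := multi hf d (u := u) (v := v) Finset.univ ?_ hR
        · rw [hds, hds] at hmul
          have e1 : ∑ p, (c p : ℝ) • rk (u p) = B - A + ∑ p, (c p : ℝ) • rk (v p) := by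
            rw [hD]; abel
          have e2 : A + I1 + (((k + 1 : ℕ) : ℝ) / m) • (B - A)
              = (1 - (k : ℝ) / m) • A + ((k : ℝ) / m) • B
              + (I1 - (1 / (m : ℝ)) • ∑ p, (c p : ℝ) • rk (v p))
              + (1 / (m : ℝ)) • ∑ p, (c p : ℝ) • rk (u p) := by
            rw [e1]
            push_cast
            rw [add_div]
            module
          have e3 : A + I1 + ((k : ℝ) / m) • (B - A)
              = (1 - (k : ℝ) / m) • A + ((k : ℝ) / m) • B
              + (I1 - (1 / (m : ℝ)) • ∑ p, (c p : ℝ) • rk (v p))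
              + (1 / (m : ℝ)) • ∑ p, (c p : ℝ) • rk (v p) := by
            module
          rw [e2, e3]
          exact hmul
        · rintro ⟨i, j⟩ - hne w a
          refine hsub i j ?_ w a
          rintro rfl
          apply hne
          simp [hdd, hc, hd]
    have := ind m le_rfl
    rw [div_self hm'.ne', one_smul] at this
    have e4 : A + I1 + (B - A) = B + I1 := by abel
    rw [e4] at this
    exact this
  refine le_of_forall_pos_le_add fun δ hδ => ?_
  set Q := |K * ∫ z, ‖z‖ ∂(GG (1 : Matrix (Fin n) (Fin n) ℝ))| with hQ
  have hQ0 : 0 ≤ Q := abs_nonneg _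
  have he : 0 < δ / (2 * Q + 1) := by positivity
  have h1 := eps_close hf hA he.le
  have h2 := eps_close hf hB he.le
  have h3 := main _ he
  have h4 : δ / (2 * Q + 1) * (K * ∫ z, ‖z‖ ∂(GG (1 : Matrix (Fin n) (Fin n) ℝ)))
      ≤ δ / (2 * Q + 1) * Q := mul_le_mul_of_nonneg_left (le_abs_self _) he.le
  have h5 : 2 * (δ / (2 * Q + 1) * Q) ≤ δ := by
    rw [div_mul_eq_mul_div, ← mul_div_assoc, div_le_iff₀ (by positivity)]
    nlinarith
  rw [abs_le] at h1 h2
  linarith [h1.1, h1.2, h2.1, h2.2]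

end comp

/-- sum of the `ℓ` largest coordinates -/
noncomputable def SL {n : ℕ} (ℓ : ℕ) (x : EuclideanSpace ℝ (Fin n)) : ℝ :=
  sSup {s : ℝ | ∃ I : Finset (Fin n), I.card = ℓ ∧ s = ∑ i ∈ I, x i}

lemma SL_finite {n : ℕ} (ℓ : ℕ) (x : EuclideanSpace ℝ (Fin n)) :
    {s : ℝ | ∃ I : Finset (Fin n), I.card = ℓ ∧ s = ∑ i ∈ I, x i}.Finite := by
  refine (Set.finite_range (fun I : Finset (Fin n) => ∑ i ∈ I, x i)).subset ?_
  rintro s ⟨I, -, rfl⟩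
  exact ⟨I, rfl⟩

lemma le_SL {n : ℕ} {ℓ : ℕ} (x : EuclideanSpace ℝ (Fin n)) {I : Finset (Fin n)} (hI : I.card = ℓ) :
    ∑ i ∈ I, x i ≤ SL ℓ x :=
  le_csSup (SL_finite ℓ x).bddAbove ⟨I, hI, rfl⟩

lemma exists_SL {n : ℕ} {ℓ : ℕ} (h : ℓ ≤ n) (x : EuclideanSpace ℝ (Fin n)) :
    ∃ I : Finset (Fin n), I.card = ℓ ∧ SL ℓ x = ∑ i ∈ I, x i := by
  have hne : {s : ℝ | ∃ I : Finset (Fin n), I.card = ℓ ∧ s = ∑ i ∈ I, x i}.Nonempty := by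
    obtain ⟨I, -, hI⟩ := Finset.exists_subset_card_eq (s := (Finset.univ : Finset (Fin n)))
      (n := ℓ) (by simpa using h)
    exact ⟨_, I, hI, rfl⟩
  exact hne.csSup_mem (SL_finite ℓ x)

lemma SL_lip {n : ℕ} {ℓ : ℕ} (h : ℓ ≤ n) (x y : EuclideanSpace ℝ (Fin n)) :
    |SL ℓ x - SL ℓ y| ≤ (n : ℝ) * ‖x - y‖ := by
  have key : ∀ x y : EuclideanSpace ℝ (Fin n), SL ℓ x - SL ℓ y ≤ (n : ℝ) * ‖x - y‖ := by
    intro x y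
    obtain ⟨I, hI, hx⟩ := exists_SL h x
    have hy := le_SL y hI
    have : ∑ i ∈ I, x i - ∑ i ∈ I, y i ≤ (n : ℝ) * ‖x - y‖ := by
      rw [← Finset.sum_sub_distrib]
      calc ∑ i ∈ I, (x i - y i) ≤ ∑ i ∈ I, ‖x - y‖ := by
            refine Finset.sum_le_sum fun i _ => ?_
            have := PiLp.norm_apply_le (x - y) i
            exact (le_abs_self _).trans (by simpa using this)
        _ = (ℓ : ℝ) * ‖x - y‖ := by simp [hI]
        _ ≤ (n : ℝ) * ‖x - y‖ := by gcongr
    linarith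
  rw [abs_le]
  have h1 := key x y
  have h2 := key y x
  rw [norm_sub_rev] at h2
  constructor <;> linarith

lemma exch {n : ℕ} {I J : Finset (Fin n)} (h : I.card = J.card) {i j : Fin n} (hij : i ≠ j)
    (hiI : i ∈ I) (hjI : j ∈ I) (hiJ : i ∉ J) (hjJ : j ∉ J) :
    ∃ I' J' : Finset (Fin n), I'.card = I.card ∧ J'.card = J.card ∧ i ∈ I' ∧ j ∉ I' ∧ i ∉ J' ∧ j ∈ J'
      ∧ ∀ w : Fin n → ℝ, ∑ k ∈ I', w k + ∑ k ∈ J', w k = ∑ k ∈ I, w k + ∑ k ∈ J, w k := by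
  have hne : (J \ I).Nonempty := by
    rw [← Finset.card_pos, ← Finset.card_sdiff_comm h, Finset.card_pos]
    exact ⟨i, by simp [hiI, hiJ]⟩
  obtain ⟨k, hk⟩ := hne
  rw [Finset.mem_sdiff] at hk
  obtain ⟨hkJ, hkI⟩ := hk
  have hki : i ≠ k := by rintro rfl; exact hkI hiI
  have hkj : j ≠ k := by rintro rfl; exact hkI hjI
  refine ⟨insert k (I.erase j), insert j (J.erase k), ?_, ?_, ?_, ?_, ?_, ?_, ?_⟩
  · rw [Finset.card_insert_of_notMem (by simp [hkI]), Finset.card_erase_add_one hjI]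
  · rw [Finset.card_insert_of_notMem (by simp [hjJ]), Finset.card_erase_add_one hkJ]
  · simp [hij, hiI]
  · simp [hkj]
  · simp [hij, hiJ]
  · simp
  · intro w
    rw [Finset.sum_insert (by simp [hkI]), Finset.sum_insert (by simp [hjJ])]
    have h1 := Finset.add_sum_erase I w hjI
    have h2 := Finset.add_sum_erase J w hkJ
    linarith

lemma SL_sub {n : ℕ} {ℓ : ℕ} (h : ℓ ≤ n) (i j : Fin n) (hij : i ≠ j)
    (w : EuclideanSpace ℝ (Fin n)) (a : ℝ) :
    SL ℓ (w + a • WithLp.toLp 2 (Pi.single i 1 + Pi.single j 1))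
        + SL ℓ (w + (-a) • WithLp.toLp 2 (Pi.single i 1 + Pi.single j 1))
        ≤ SL ℓ (w + a • WithLp.toLp 2 (Pi.single i 1 - Pi.single j 1))
        + SL ℓ (w + (-a) • WithLp.toLp 2 (Pi.single i 1 - Pi.single j 1)) := by
  obtain ⟨I, hI, hx⟩ := exists_SL h (w + a • WithLp.toLp 2 (Pi.single i 1 + Pi.single j 1))
  obtain ⟨J, hJ, hy⟩ := exists_SL h (w + (-a) • WithLp.toLp 2 (Pi.single i 1 + Pi.single j 1))
  rw [hx, hy]
  have ev1 : ∀ (I : Finset (Fin n)) (a : ℝ),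
      ∑ k ∈ I, (w + a • WithLp.toLp 2 (Pi.single i 1 + Pi.single j 1) : EuclideanSpace ℝ (Fin n)) k
        = ∑ k ∈ I, w k + ((if i ∈ I then a else 0) + (if j ∈ I then a else 0)) := by
    intro I a
    simp [Finset.sum_add_distrib, mul_add, Pi.single_apply]
  have ev2 : ∀ (I : Finset (Fin n)) (a : ℝ),
      ∑ k ∈ I, (w + a • WithLp.toLp 2 (Pi.single i 1 - Pi.single j 1) : EuclideanSpace ℝ (Fin n)) k
        = ∑ k ∈ I, w k + ((if i ∈ I then a else 0) - (if j ∈ I then a else 0)) := by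
    intro I a
    simp [Finset.sum_add_distrib, mul_sub, Pi.single_apply]
  have up : ∀ I' J' : Finset (Fin n), I'.card = ℓ → J'.card = ℓ →
      (∑ k ∈ I', w k + ((if i ∈ I' then a else 0) - (if j ∈ I' then a else 0)))
      + (∑ k ∈ J', w k + ((if i ∈ J' then -a else 0) - (if j ∈ J' then -a else 0)))
      ≤ SL ℓ (w + a • WithLp.toLp 2 (Pi.single i 1 - Pi.single j 1))
        + SL ℓ (w + (-a) • WithLp.toLp 2 (Pi.single i 1 - Pi.single j 1)) := by
    intro I' J' hI' hJ'
    rw [← ev2, ← ev2]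
    exact add_le_add (le_SL _ hI') (le_SL _ hJ')
  rw [ev1, ev1]
  have u1 := up I J hI hJ
  have u2 := up J I hJ hI
  by_cases h1 : i ∈ I <;> by_cases h2 : j ∈ I <;> by_cases h3 : i ∈ J <;> by_cases h4 : j ∈ J <;>
    simp only [h1, h2, h3, h4, if_true, if_false] at u1 u2 ⊢
  all_goals first
    | linarith
    | (rcases le_total 0 a with ha | ha <;> linarith)
    | skip
  · obtain ⟨I', J', c1, c2, m1, m2, m3, m4, hw⟩ := exch (hI.trans hJ.symm) hij h1 h2 h3 h4
    have u3 := up I' J' (c1.trans hI) (c2.trans hJ)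
    have := hw w
    simp only [m1, m2, m3, m4, if_true, if_false] at u3
    linarith
  · obtain ⟨J', I', c2, c1, m3, m4, m1, m2, hw⟩ := exch (hJ.trans hI.symm) hij h3 h4 h1 h2
    have u3 := up I' J' (c1.trans hI) (c2.trans hJ)
    have := hw w
    simp only [m1, m2, m3, m4, if_true, if_false] at u3
    linarith

lemma gauss_memLp {Ω : Type*} [MeasurableSpace Ω] (P : Measure Ω) {n : ℕ}
    {X : Fin n → Ω → ℝ} (hXm : ∀ i, Measurable (X i)) (hX : IsCenteredGaussianVec P X) (i : Fin n) :
    MemLp (X i) 2 P := by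
  have h := hX (Pi.single i 1)
  have e : (fun ω => ∑ j, (Pi.single i 1 : Fin n → ℝ) j * X j ω) = X i := by
    ext ω
    simp [Pi.single_apply]
  rw [e] at h
  have h2 := memLp_id_gaussianReal' (μ := 0)
    (v := Real.toNNReal (∫ ω, (∑ j, (Pi.single i 1 : Fin n → ℝ) j * X j ω) ^ 2 ∂P)) 2 (by simp)
  rw [← h, memLp_map_measure_iff (by fun_prop) (hXm i).aemeasurable] at h2
  exact h2

/-- covariance matrix -/
noncomputable def covM {Ω : Type*} [MeasurableSpace Ω] (P : Measure Ω) {n : ℕ}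
    (X : Fin n → Ω → ℝ) : Matrix (Fin n) (Fin n) ℝ := fun i j => ∫ ω, X i ω * X j ω ∂P

open Matrix in
lemma covM_quad {Ω : Type*} [MeasurableSpace Ω] (P : Measure Ω) {n : ℕ}
    {X : Fin n → Ω → ℝ} (hXm : ∀ i, Measurable (X i)) (hX : IsCenteredGaussianVec P X)
    (a : Fin n → ℝ) : a ⬝ᵥ covM P X *ᵥ a = ∫ ω, (∑ i, a i * X i ω) ^ 2 ∂P := by
  have hi : ∀ i j, Integrable (fun ω => X i ω * X j ω) P := fun i j =>
    (gauss_memLp P hXm hX i).integrable_mul (gauss_memLp P hXm hX j)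
  have e : ∀ ω, (∑ i, a i * X i ω) ^ 2 = ∑ i, ∑ j, (a i * a j) * (X i ω * X j ω) := by
    intro ω
    rw [pow_two, Finset.sum_mul_sum]
    refine Finset.sum_congr rfl fun i _ => Finset.sum_congr rfl fun j _ => by ring
  simp_rw [e]
  rw [integral_finsetSum _ fun i _ => integrable_finsetSum _ fun j _ => (hi i j).const_mul _]
  simp only [dotProduct, Matrix.mulVec, Finset.mul_sum]
  refine Finset.sum_congr rfl fun i _ => ?_
  rw [integral_finsetSum _ fun j _ => (hi i j).const_mul _]
  refine Finset.sum_congr rfl fun j _ => ?_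
  rw [integral_const_mul, covM]
  ring

lemma covM_psd {Ω : Type*} [MeasurableSpace Ω] (P : Measure Ω) {n : ℕ}
    {X : Fin n → Ω → ℝ} (hXm : ∀ i, Measurable (X i)) (hX : IsCenteredGaussianVec P X) :
    (covM P X).PosSemidef := by
  apply Matrix.PosSemidef.of_dotProduct_mulVec_nonneg
  · ext i j
    simp [covM, mul_comm]
  · intro x
    rw [star_trivial, covM_quad P hXm hX]
    exact integral_nonneg fun ω => sq_nonneg _

lemma law_eq {Ω : Type*} [MeasurableSpace Ω] (P : Measure Ω) [IsProbabilityMeasure P] {n : ℕ}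
    {X : Fin n → Ω → ℝ} (hXm : ∀ i, Measurable (X i)) (hX : IsCenteredGaussianVec P X) :
    P.map (fun ω => (WithLp.toLp 2 (fun i => X i ω) : EuclideanSpace ℝ (Fin n)))
      = GG (covM P X) := by
  have hm : Measurable
      (fun ω => (WithLp.toLp 2 (fun i => X i ω) : EuclideanSpace ℝ (Fin n))) := by fun_prop
  have := Measure.isProbabilityMeasure_map (μ := P) hm.aemeasurable
  apply Measure.ext_of_charFun
  ext t
  rw [charFun_GG (covM_psd P hXm hX), covM_quad P hXm hX, charFun_apply,
    integral_map hm.aemeasurable (by fun_prop)]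
  have h := congrArg (fun μ => charFun μ (1 : ℝ)) (hX t.ofLp)
  simp only at h
  rw [charFun_gaussianReal, charFun_apply_real, integral_map (by fun_prop) (by fun_prop),
    Real.coe_toNNReal _ (integral_nonneg fun ω => sq_nonneg _)] at h
  convert h using 1
  · refine integral_congr_ae (ae_of_all _ fun ω => ?_)
    simp [PiLp.inner_apply, mul_comm]
  · simp

lemma int_SL {Ω : Type*} [MeasurableSpace Ω] (P : Measure Ω) [IsProbabilityMeasure P] {n : ℕ}
    {X : Fin n → Ω → ℝ} (hXm : ∀ i, Measurable (X i)) (hX : IsCenteredGaussianVec P X)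
    {ℓ : ℕ} (hℓn : ℓ ≤ n) :
    ∫ ω, sSup {s : ℝ | ∃ I : Finset (Fin n), I.card = ℓ ∧ s = ∑ i ∈ I, X i ω} ∂P
      = ∫ x, SL ℓ x ∂(GG (covM P X)) := by
  rw [← law_eq P hXm hX, integral_map (by fun_prop)
    (f_cont (SL_lip hℓn)).aestronglyMeasurable]
  rfl

/-- Comparison in expectation for the sum of the `ℓ` largest coordinates: if `X`, `Y` are
centered Gaussian vectors with equal variances and `Cov(X_i,X_j) ≤ Cov(Y_i,Y_j)` for all
`i, j`, and `S_ℓ(Z) = max {∑_{i∈I} Z_i : |I| = ℓ}`, then `E[S_ℓ(X)] ≥ E[S_ℓ(Y)]` for every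
`1 ≤ ℓ ≤ n`. -/
theorem expectation_sum_of_largest_comparison {Ω : Type*} [MeasurableSpace Ω] (P : Measure Ω)
    [IsProbabilityMeasure P] (n : ℕ) (X Y : Fin n → Ω → ℝ)
    (hXm : ∀ i, Measurable (X i)) (hYm : ∀ i, Measurable (Y i))
    (hX : IsCenteredGaussianVec P X) (hY : IsCenteredGaussianVec P Y)
    (hvar : ∀ i, ∫ ω, (X i ω) ^ 2 ∂P = ∫ ω, (Y i ω) ^ 2 ∂P)
    (hcov : ∀ i j, ∫ ω, X i ω * X j ω ∂P ≤ ∫ ω, Y i ω * Y j ω ∂P)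
    (ℓ : ℕ) (hℓ1 : 1 ≤ ℓ) (hℓn : ℓ ≤ n) :
    ∫ ω, sSup {s : ℝ | ∃ I : Finset (Fin n), I.card = ℓ ∧ s = ∑ i ∈ I, Y i ω} ∂P
      ≤ ∫ ω, sSup {s : ℝ | ∃ I : Finset (Fin n), I.card = ℓ ∧ s = ∑ i ∈ I, X i ω} ∂P := by
  rw [int_SL P hXm hX hℓn, int_SL P hYm hY hℓn]
  refine compare (SL_lip hℓn) (SL_sub hℓn) (covM_psd P hXm hX) (covM_psd P hYm hY) ?_ hcov
  intro i
  simpa [covM, pow_two] using hvar i
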